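/- arXiv:1708.05218 — 2 statements merged into one kernel-verified Lean document; each statement's English description precedes it below -/
import Mathlib

section
/- Let X be a real Banach space with the Daugavet property. Then for every sequence (S_n) of slices of the closed unit ball B_X and every x ∈ X with ‖x‖ = 1 there exist points x_n ∈ S_n, n ∈ ℕ, such that x does not belong to the closed linear span of {x_n : n ∈ ℕ}. -/
open Bornology Set Pointwise

variable {X : Type*} [NormedAddCommGroup X] [NormedSpace ℝ X]

/-- The sliceSet of `A` given by the functional `f` and `ε > 0`. -/
noncomputable def sliceSet (A : Set X) (f : X →L[ℝ] ℝ) (ε : ℝ) : Set X :=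
  {x ∈ A | sSup (f '' A) - ε < f x}

/-- `S` is a sliceSet of `A`: a nonempty set of the form `sliceSet A f ε` with `f ≠ 0`, `ε > 0`. -/
def IsSlice (A S : Set X) : Prop :=
  S.Nonempty ∧ ∃ f : X →L[ℝ] ℝ, f ≠ 0 ∧ ∃ ε : ℝ, 0 < ε ∧ S = sliceSet A f ε

/-- A sequence of subsets of `A` is determining if every set `B` meeting all of them
has `A` inside the closed convex hull of `B`. -/
def Determining (A : Set X) (V : ℕ → Set X) : Prop :=
  ∀ B : Set X, (∀ n, (B ∩ V n).Nonempty) → A ⊆ closure (convexHull ℝ B)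

/-- A bounded set is slicely countably determined if it has a determining sequence of slices. -/
def IsSCD (A : Set X) : Prop :=
  ∃ V : ℕ → Set X, (∀ n, IsSlice A (V n)) ∧ Determining A V

/-- The Daugavet property: every rank-one operator `x ↦ f x • y` satisfies the
Daugavet equation `‖Id + T‖ = 1 + ‖T‖`. -/
def DaugavetProperty (X : Type*) [NormedAddCommGroup X] [NormedSpace ℝ X] : Prop :=
  ∀ (f : X →L[ℝ] ℝ) (y : X),
    ‖ContinuousLinearMap.id ℝ X + f.smulRight y‖ = 1 + ‖f.smulRight y‖

/-!
Testing the Daugavet equation for `f ⊗ y` against a norming functional `g` shows that every slice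
of the unit ball contains a smaller one, cut out by `g + g(y) f`, on which `‖y + u‖` is almost `2`.
By compactness of the unit sphere of a finite-dimensional `Y` the smaller slice can be chosen
uniformly in `y`, and then `‖y + t u‖ ≥ (1 - η) ‖y‖` for `y ∈ Y` and all scalars `t`. Choosing
`xₙ ∈ Sₙ` in this way for the span of `Y` and the earlier points, with factors `1 - ηₙ` whose
product stays above `c < 1`, keeps every `y ∈ Y` at distance at least `c ‖y‖` from the closed span
of the `xₙ`.
-/

/-- The sequence `u` defined by course-of-values recursion `u n = next n {u 0, …, u (n - 1)}`. -/
noncomputable def greedySeq {α : Type*} (next : ℕ → Set α → α) (n : ℕ) : α :=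
  next n (range fun k : Fin n ↦ greedySeq next k)

theorem greedySeq_eq {α : Type*} (next : ℕ → Set α → α) (n : ℕ) :
    greedySeq next n = next n (greedySeq next '' Iio n) := by
  rw [greedySeq, ← Fin.range_val, ← range_comp]
  rfl

theorem exists_seq_forall_image_Iio {α : Type*} {P : ℕ → Set α → α → Prop}
    (h : ∀ n t, t.Finite → ∃ a, P n t a) : ∃ u : ℕ → α, ∀ n, P n (u '' Iio n) (u n) := by
  have : Nonempty α := (h 0 ∅ finite_empty).nonempty
  choose! next hnext using h
  refine ⟨greedySeq next, fun n ↦ ?_⟩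
  rw [greedySeq_eq next n]
  exact hnext n _ ((finite_Iio n).image _)

section ApproxBirkhoffOrthogonal

variable {𝕜 E : Type*} [NormedField 𝕜] [SeminormedAddCommGroup E] [NormedSpace 𝕜 E]
  {c d : ℝ} {Y Z W : Submodule 𝕜 E}

/-- Approximate Birkhoff orthogonality of `Y` to `Z`: adding an element of `Z` to `y ∈ Y`
shrinks the norm at most by the factor `c`; `c = 1` is Birkhoff orthogonality. In a normed space
with `c > 0` it says that `Y ∩ Z = 0` and that the projection of `Y ⊕ Z` onto `Y` has norm at
most `c⁻¹`. -/
def ApproxBirkhoffOrthogonal (c : ℝ) (Y Z : Submodule 𝕜 E) : Prop :=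
  ∀ y ∈ Y, ∀ z ∈ Z, c * ‖y‖ ≤ ‖y + z‖

namespace ApproxBirkhoffOrthogonal

theorem bot_right : ApproxBirkhoffOrthogonal 1 Y ⊥ := by
  rintro y - z hz
  rw [(Submodule.mem_bot 𝕜).1 hz, add_zero, one_mul]

theorem mono_const (h : ApproxBirkhoffOrthogonal c Y Z) (hdc : d ≤ c) :
    ApproxBirkhoffOrthogonal d Y Z := fun y hy z hz ↦
  (mul_le_mul_of_nonneg_right hdc (norm_nonneg y)).trans (h y hy z hz)

theorem sup_right (hYZ : ApproxBirkhoffOrthogonal c Y Z)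
    (hW : ApproxBirkhoffOrthogonal d (Y ⊔ Z) W) (hd : 0 ≤ d) :
    ApproxBirkhoffOrthogonal (d * c) Y (Z ⊔ W) := by
  intro y hy v hv
  obtain ⟨z, hz, w, hw, rfl⟩ := Submodule.mem_sup.1 hv
  calc d * c * ‖y‖ = d * (c * ‖y‖) := mul_assoc _ _ _
    _ ≤ d * ‖y + z‖ := mul_le_mul_of_nonneg_left (hYZ y hy z hz) hd
    _ ≤ ‖y + z + w‖ := hW _ (Submodule.add_mem_sup hy hz) w hw
    _ = ‖y + (z + w)‖ := by rw [add_assoc]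

theorem iSup_right {ι : Type*} [Nonempty ι] {Z : ι → Submodule 𝕜 E} (hZ : Directed (· ≤ ·) Z)
    (h : ∀ i, ApproxBirkhoffOrthogonal c Y (Z i)) : ApproxBirkhoffOrthogonal c Y (⨆ i, Z i) := by
  intro y hy z hz
  obtain ⟨i, hi⟩ := (Submodule.mem_iSup_of_directed Z hZ).1 hz
  exact h i y hy z hi

theorem topologicalClosure_right (h : ApproxBirkhoffOrthogonal c Y Z) :
    ApproxBirkhoffOrthogonal c Y Z.topologicalClosure := by
  intro y hy z hz
  have hclosed : IsClosed {z : E | c * ‖y‖ ≤ ‖y + z‖} :=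
    isClosed_le continuous_const (by fun_prop)
  exact closure_minimal (h y hy) hclosed hz

theorem notMem_right (h : ApproxBirkhoffOrthogonal c Y Z) (hc : 0 < c) {y : E} (hy : y ∈ Y)
    (hy₀ : ‖y‖ ≠ 0) : y ∉ Z := by
  intro hyZ
  have hle := h y hy (-y) (Z.neg_mem hyZ)
  rw [add_neg_cancel, norm_zero] at hle
  exact hle.not_gt (mul_pos hc (hy₀.symm.lt_of_le (norm_nonneg y)))

end ApproxBirkhoffOrthogonal

end ApproxBirkhoffOrthogonal

theorem apply_le_norm_of_norm_le_one {f : X →L[ℝ] ℝ} (hf : ‖f‖ ≤ 1) (x : X) : f x ≤ ‖x‖ :=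
  (Real.le_norm_self _).trans (by simpa using f.le_of_opNorm_le hf x)

theorem one_sub_le_norm_add_smul {y u : X} {η t : ℝ} (hy : ‖y‖ ≤ 1) (hu : ‖u‖ ≤ 1) (hη : η ≤ 1)
    (ht : 0 ≤ t) (hyu : 2 - η ≤ ‖y + u‖) : 1 - η ≤ ‖y + t • u‖ := by
  obtain ⟨g, hg, hgyu⟩ := exists_dual_vector'' ℝ (y + u)
  have hg_sum : g y + g u = ‖y + u‖ := by simpa using hgyu
  have hgy : 1 - η ≤ g y := by linarith [apply_le_norm_of_norm_le_one hg u]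
  have hgu : 0 ≤ g u := by linarith [apply_le_norm_of_norm_le_one hg y]
  calc 1 - η ≤ g y + t * g u := by linarith [mul_nonneg ht hgu]
    _ = g (y + t • u) := by simp
    _ ≤ ‖y + t • u‖ := apply_le_norm_of_norm_le_one hg _

theorem approxBirkhoffOrthogonal_span_singleton {Y : Submodule ℝ X} {u : X} {η : ℝ}
    (hu : ‖u‖ ≤ 1) (hη : η ≤ 1) (hYu : ∀ y ∈ Y, ‖y‖ = 1 → 2 - η ≤ ‖y + u‖) :
    ApproxBirkhoffOrthogonal (1 - η) Y (Submodule.span ℝ {u}) := by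
  have unit_bound (y : X) (hy : y ∈ Y) (hy₁ : ‖y‖ = 1) (t : ℝ) : 1 - η ≤ ‖y + t • u‖ := by
    rcases le_total 0 t with ht | ht
    · exact one_sub_le_norm_add_smul hy₁.le hu hη ht (hYu y hy hy₁)
    · have hneg : ‖-y‖ = 1 := by rwa [norm_neg]
      calc 1 - η ≤ ‖-y + (-t) • u‖ := one_sub_le_norm_add_smul hneg.le hu hη
            (neg_nonneg.2 ht) (hYu (-y) (Y.neg_mem hy) hneg)
        _ = ‖y + t • u‖ := by rw [neg_smul, ← neg_add, norm_neg]
  intro y hy z hz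
  obtain ⟨t, rfl⟩ := Submodule.mem_span_singleton.1 hz
  rcases eq_or_ne y 0 with rfl | hy₀
  · simp
  calc (1 - η) * ‖y‖ ≤ ‖‖y‖⁻¹ • y + (‖y‖⁻¹ * t) • u‖ * ‖y‖ := by
        gcongr
        exact unit_bound _ (Y.smul_mem _ hy) (norm_smul_inv_norm (𝕜 := ℝ) hy₀) _
    _ = ‖y + t • u‖ := by
        rw [mul_smul, ← smul_add, norm_smul, norm_inv, norm_norm, mul_right_comm,
          inv_mul_cancel₀ (norm_ne_zero_iff.2 hy₀), one_mul]

section Slices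

variable {A S : Set X} {f : X →L[ℝ] ℝ} {ε : ℝ}

theorem sliceSet_nonempty (hA : A.Nonempty) (hε : 0 < ε) : (sliceSet A f ε).Nonempty := by
  obtain ⟨_, ⟨x, hxA, rfl⟩, hx⟩ := exists_lt_of_lt_csSup (hA.image f) (sub_lt_self _ hε)
  exact ⟨x, hxA, hx⟩

theorem isSlice_sliceSet (hA : A.Nonempty) (hf : f ≠ 0) (hε : 0 < ε) :
    IsSlice A (sliceSet A f ε) :=
  ⟨sliceSet_nonempty hA hε, f, hf, ε, hε, rfl⟩

theorem sliceSet_smul {r : ℝ} (hr : 0 < r) : sliceSet A (r • f) (r * ε) = sliceSet A f ε := by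
  have hsup : sSup ((r • f) '' A) = r * sSup (f '' A) := by
    rw [← smul_eq_mul, ← Real.sSup_smul_of_nonneg hr.le, ← image_smul, image_image]
    rfl
  ext x
  rw [sliceSet, sliceSet, hsup, mem_ofPred_eq, mem_ofPred_eq, ← mul_sub, smul_apply, smul_eq_mul,
    mul_lt_mul_iff_right₀ hr]

theorem IsSlice.exists_norm_eq_one (hS : IsSlice A S) :
    ∃ f : X →L[ℝ] ℝ, ‖f‖ = 1 ∧ ∃ ε > 0, S = sliceSet A f ε := by
  obtain ⟨-, f, hf, ε, hε, rfl⟩ := hS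
  have hr : 0 < ‖f‖⁻¹ := inv_pos.2 (norm_pos_iff.2 hf)
  exact ⟨‖f‖⁻¹ • f, norm_smul_inv_norm (𝕜 := ℝ) hf, ‖f‖⁻¹ * ε, mul_pos hr hε,
    (sliceSet_smul hr).symm⟩

theorem sSup_image_closedBall_eq_norm (f : X →L[ℝ] ℝ) :
    sSup (f '' Metric.closedBall 0 1) = ‖f‖ := by
  refine csSup_eq_of_forall_le_of_forall_lt_exists_gt
    ((Metric.nonempty_closedBall.2 zero_le_one).image f) ?_ fun c hc ↦ ?_
  · rintro _ ⟨u, hu, rfl⟩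
    exact (Real.le_norm_self _).trans (f.unit_le_opNorm u (mem_closedBall_zero_iff.1 hu))
  · obtain ⟨u, hu, hcu⟩ := f.exists_lt_apply_of_lt_opNorm hc
    rcases lt_abs.1 hcu with hpos | hneg
    · exact ⟨f u, mem_image_of_mem f (by simpa using hu.le), hpos⟩
    · exact ⟨f (-u), mem_image_of_mem f (by simpa using hu.le), by simpa using hneg⟩

theorem mem_sliceSet_closedBall {u : X} :
    u ∈ sliceSet (Metric.closedBall 0 1) f ε ↔ ‖u‖ ≤ 1 ∧ ‖f‖ - ε < f u := by
  rw [sliceSet, mem_ofPred_eq, sSup_image_closedBall_eq_norm, mem_closedBall_zero_iff]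

theorem isSlice_closedBall_of_lt_norm {c : ℝ} (hf : f ≠ 0) (hc : c < ‖f‖) :
    IsSlice (Metric.closedBall 0 1) {u | ‖u‖ ≤ 1 ∧ c < f u} := by
  convert! isSlice_sliceSet (Metric.nonempty_closedBall.2 zero_le_one) hf (sub_pos.2 hc) using 1
  ext u
  rw [mem_sliceSet_closedBall, sub_sub_cancel, mem_ofPred_eq]

end Slices

namespace DaugavetProperty

variable {S : Set X} {ε : ℝ}

theorem exists_lt_norm_add_smul (h : DaugavetProperty X) {f : X →L[ℝ] ℝ} (hf : ‖f‖ = 1)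
    {y : X} (hy : ‖y‖ = 1) (hε : 0 < ε) :
    ∃ g : X →L[ℝ] ℝ, ‖g‖ ≤ 1 ∧ 0 ≤ g y ∧ 2 - ε < ‖g + g y • f‖ := by
  let T : X →L[ℝ] X := ContinuousLinearMap.id ℝ X + f.smulRight y
  have hT : ‖T‖ = 2 := by
    rw [h f y, ContinuousLinearMap.norm_smulRight_apply, hf, hy]
    norm_num
  obtain ⟨v, hv, hTv⟩ := T.exists_lt_apply_of_lt_opNorm (r := 2 - ε) (by linarith)
  obtain ⟨g, hg, hgTv⟩ := exists_dual_vector'' ℝ (T v)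
  have hcomp : (g + g y • f) v = g (T v) := by simp [T, mul_comm]
  have hlarge : 2 - ε < ‖g + g y • f‖ :=
    calc 2 - ε < ‖T v‖ := hTv
      _ = (g + g y • f) v := (hcomp.trans hgTv).symm
      _ ≤ ‖(g + g y • f) v‖ := Real.le_norm_self _
      _ ≤ ‖g + g y • f‖ := ContinuousLinearMap.unit_le_opNorm _ v hv.le
  rcases le_total 0 (g y) with hgy | hgy
  · exact ⟨g, hg, hgy, hlarge⟩
  · have hneg : -g + (-g) y • f = -(g + g y • f) := by
      rw [neg_add, ← neg_smul]
      rfl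
    exact ⟨-g, by rwa [norm_neg], by simpa using hgy, by rwa [hneg, norm_neg]⟩

theorem exists_isSlice_subset_lt_norm_add (h : DaugavetProperty X)
    (hS : IsSlice (Metric.closedBall 0 1) S) {y : X} (hy : ‖y‖ = 1) (hε : 0 < ε) :
    ∃ S' ⊆ S, IsSlice (Metric.closedBall 0 1) S' ∧ ∀ u ∈ S', 2 - ε < ‖y + u‖ := by
  obtain ⟨f, hf, δ₀, hδ₀, rfl⟩ := hS.exists_norm_eq_one
  obtain ⟨δ, hδ, hδ_min⟩ := exists_between (lt_min (lt_min hδ₀ hε) one_pos)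
  simp only [lt_min_iff] at hδ_min
  obtain ⟨⟨hδδ₀, hδε⟩, hδ₁⟩ := hδ_min
  obtain ⟨g, hg, hgy₀, hlarge⟩ := h.exists_lt_norm_add_smul hf hy hδ
  have hgy₁ : g y ≤ 1 := hy ▸ apply_le_norm_of_norm_le_one hg y
  have hne : g + g y • f ≠ 0 := norm_pos_iff.1 (by linarith)
  refine ⟨_, ?_, isSlice_closedBall_of_lt_norm hne hlarge, ?_⟩
  · rintro u ⟨hu, hFu⟩
    have hgu : g u ≤ 1 := (apply_le_norm_of_norm_le_one hg u).trans hu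
    have hprod : 1 - δ < g y * f u := by
      simp only [add_apply, smul_apply, smul_eq_mul] at hFu
      linarith
    have hfu : 0 < f u := pos_of_mul_pos_right (by linarith) hgy₀
    refine mem_sliceSet_closedBall.2 ⟨hu, ?_⟩
    calc ‖f‖ - δ₀ < 1 - δ := by linarith
      _ < g y * f u := hprod
      _ ≤ f u := mul_le_of_le_one_left hfu.le hgy₁
  · rintro u ⟨hu, hFu⟩
    have hfu : f u ≤ 1 := (apply_le_norm_of_norm_le_one hf.le u).trans hu
    calc 2 - ε < 2 - δ := by linarith
      _ < g u + g y * f u := hFu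
      _ ≤ g u + g y := by linarith [mul_le_of_le_one_right hgy₀ hfu]
      _ = g (y + u) := by rw [map_add, add_comm]
      _ ≤ ‖y + u‖ := apply_le_norm_of_norm_le_one hg _

theorem exists_isSlice_subset_forall_isCompact (h : DaugavetProperty X) {K : Set X}
    (hK : IsCompact K) (hK₁ : ∀ y ∈ K, ‖y‖ = 1) (hε : 0 < ε)
    (hS : IsSlice (Metric.closedBall 0 1) S) :
    ∃ S' ⊆ S, IsSlice (Metric.closedBall 0 1) S' ∧ ∀ y ∈ K, ∀ u ∈ S', 2 - ε < ‖y + u‖ := by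
  revert S
  refine hK.induction_on (p := fun K ↦ ∀ {S : Set X}, IsSlice (Metric.closedBall 0 1) S →
    ∃ S' ⊆ S, IsSlice (Metric.closedBall 0 1) S' ∧ ∀ y ∈ K, ∀ u ∈ S', 2 - ε < ‖y + u‖) ?_ ?_ ?_ ?_
  · exact fun {S} hS ↦ ⟨S, subset_rfl, hS, by simp⟩
  · intro K L hKL hL S hS
    obtain ⟨S', hS'S, hS', hfar⟩ := hL hS
    exact ⟨S', hS'S, hS', fun y hy ↦ hfar y (hKL hy)⟩
  · intro K L hK hL S hS
    obtain ⟨S', hS'S, hS', hfarK⟩ := hK hS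
    obtain ⟨S'', hS''S', hS'', hfarL⟩ := hL hS'
    exact ⟨S'', hS''S'.trans hS'S, hS'',
      fun y hy u hu ↦ hy.elim (hfarK y · u (hS''S' hu)) (hfarL y · u hu)⟩
  · intro y hy
    refine ⟨Metric.ball y (ε / 2),
      mem_nhdsWithin_of_mem_nhds (Metric.ball_mem_nhds y (half_pos hε)), fun {S} hS ↦ ?_⟩
    obtain ⟨S', hS'S, hS', hfar⟩ :=
      h.exists_isSlice_subset_lt_norm_add hS (hK₁ y hy) (half_pos hε)
    refine ⟨S', hS'S, hS', fun z hz u hu ↦ ?_⟩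
    have hzy : ‖z - y‖ < ε / 2 := mem_ball_iff_norm.1 hz
    have htri : ‖y + u‖ ≤ ‖z + u‖ + ‖z - y‖ := by
      simpa using norm_le_norm_add_norm_sub (z + u) (y + u)
    linarith [hfar u hu]

theorem exists_mem_approxBirkhoffOrthogonal (h : DaugavetProperty X)
    (hS : IsSlice (Metric.closedBall 0 1) S) (Y : Submodule ℝ X) [FiniteDimensional ℝ Y] {c : ℝ}
    (hc₀ : 0 ≤ c) (hc₁ : c < 1) : ∃ u ∈ S, ApproxBirkhoffOrthogonal c Y (Submodule.span ℝ {u}) := by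
  have hK : IsCompact ((↑) '' Metric.sphere (0 : Y) 1 : Set X) :=
    (isCompact_sphere 0 1).image continuous_subtype_val
  have hK₁ : ∀ y ∈ ((↑) '' Metric.sphere (0 : Y) 1 : Set X), ‖y‖ = 1 := by
    rintro _ ⟨y, hy, rfl⟩
    exact mem_sphere_zero_iff_norm.1 hy
  obtain ⟨S', hS'S, hS', hfar⟩ :=
    h.exists_isSlice_subset_forall_isCompact hK hK₁ (sub_pos.2 hc₁) hS
  obtain ⟨⟨u, huS'⟩, f, -, δ, -, rfl⟩ := hS'
  have hu : ‖u‖ ≤ 1 := (mem_sliceSet_closedBall.1 huS').1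
  refine ⟨u, hS'S huS', ?_⟩
  rw [← sub_sub_cancel 1 c]
  refine approxBirkhoffOrthogonal_span_singleton hu (sub_le_self 1 hc₀) fun y hy hy₁ ↦ ?_
  exact (hfar y ⟨⟨y, hy⟩, mem_sphere_zero_iff_norm.2 hy₁, rfl⟩ u huS').le

theorem exists_seq_approxBirkhoffOrthogonal_span_image_Iio (h : DaugavetProperty X)
    {S : ℕ → Set X} (hS : ∀ n, IsSlice (Metric.closedBall 0 1) (S n)) (Y : Submodule ℝ X)
    [FiniteDimensional ℝ Y] {c : ℕ → ℝ} (hc₀ : c 0 = 1) (hc : StrictAnti c)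
    (hc_pos : ∀ n, 0 < c n) :
    ∃ xs : ℕ → X, (∀ n, xs n ∈ S n) ∧
      ∀ n, ApproxBirkhoffOrthogonal (c n) Y (Submodule.span ℝ (xs '' Iio n)) := by
  have exists_next (n : ℕ) (t : Set X) (ht : t.Finite) : ∃ u ∈ S n,
      ApproxBirkhoffOrthogonal (c (n + 1) / c n) (Y ⊔ Submodule.span ℝ t)
        (Submodule.span ℝ {u}) := by
    have := FiniteDimensional.span_of_finite ℝ ht
    exact h.exists_mem_approxBirkhoffOrthogonal (hS n) _ (div_pos (hc_pos _) (hc_pos n)).le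
      ((div_lt_one (hc_pos n)).2 (hc n.lt_succ_self))
  obtain ⟨xs, hxs⟩ := exists_seq_forall_image_Iio exists_next
  refine ⟨xs, fun n ↦ (hxs n).1, fun n ↦ ?_⟩
  induction n with
  | zero => simpa [hc₀] using ApproxBirkhoffOrthogonal.bot_right
  | succ n ih =>
    have hspan : Submodule.span ℝ (xs '' Iio (n + 1)) =
        Submodule.span ℝ (xs '' Iio n) ⊔ Submodule.span ℝ {xs n} := by
      rw [← Submodule.span_union, ← image_singleton, ← image_union, Iio_union_right,
        Iio_add_one_eq_Iic]
    rw [hspan, ← div_mul_cancel₀ (c (n + 1)) (hc_pos n).ne']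
    exact ih.sup_right (hxs n).2 (div_pos (hc_pos _) (hc_pos n)).le

end DaugavetProperty

theorem daugavet_anti_scd_general (h : DaugavetProperty X) {S : ℕ → Set X}
    (hS : ∀ n, IsSlice (Metric.closedBall 0 1) (S n)) (Y : Submodule ℝ X)
    [FiniteDimensional ℝ Y] {c : ℝ} (hc : c < 1) :
    ∃ xs : ℕ → X, (∀ n, xs n ∈ S n) ∧
      ApproxBirkhoffOrthogonal c Y (Submodule.span ℝ (range xs)).topologicalClosure := by
  let d : ℝ := max c 0
  have hd₀ : 0 ≤ d := le_max_right c 0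
  have hd₁ : 0 < 1 - d := sub_pos.2 (max_lt hc one_pos)
  let b (n : ℕ) : ℝ := d + (1 - d) * (1 / 2) ^ n
  have hb : StrictAnti b := fun m n hmn ↦ by
    have hpow : (1 / 2 : ℝ) ^ n < (1 / 2) ^ m :=
      pow_right_strictAnti₀ one_half_pos one_half_lt_one hmn
    simp only [b]
    gcongr
  have hb_pos (n : ℕ) : 0 < b n :=
    add_pos_of_nonneg_of_pos hd₀ (mul_pos hd₁ (pow_pos one_half_pos n))
  have hcb (n : ℕ) : c ≤ b n := (le_max_left c 0).trans (le_add_of_nonneg_right (by positivity))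
  obtain ⟨xs, hxs, horth⟩ := h.exists_seq_approxBirkhoffOrthogonal_span_image_Iio hS Y
    (c := b) (by simp [b]) hb hb_pos
  refine ⟨xs, hxs, ApproxBirkhoffOrthogonal.topologicalClosure_right ?_⟩
  have hmono : Monotone fun n ↦ Submodule.span ℝ (xs '' Iio n) := fun m n hmn ↦
    Submodule.span_mono (image_mono (Iio_subset_Iio hmn))
  rw [← image_univ, ← iUnion_Iio, image_iUnion, Submodule.span_iUnion]
  exact .iSup_right hmono.directed_le fun n ↦ (horth n).mono_const (hcb n)

theorem daugavet_anti_scd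
    {X : Type*} [NormedAddCommGroup X] [NormedSpace ℝ X] [CompleteSpace X]
    (h : DaugavetProperty X)
    (S : ℕ → Set X) (hS : ∀ n, IsSlice (Metric.closedBall (0 : X) 1) (S n))
    (x : X) (hx : ‖x‖ = 1) :
    ∃ xs : ℕ → X, (∀ n, xs n ∈ S n) ∧
      x ∉ closure (Submodule.span ℝ (Set.range xs) : Set X) := by
  obtain ⟨xs, hxs, horth⟩ := daugavet_anti_scd_general h hS (Submodule.span ℝ {x}) one_half_lt_one
  exact ⟨xs, hxs, horth.notMem_right one_half_pos (Submodule.mem_span_singleton_self x)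
    (hx ▸ one_ne_zero)⟩
end

section
/- Let X be a real Banach space with the Daugavet property. Then there exists a bounded, non-convex set U ⊂ X which is not SCD but which admits a determining sequence consisting of nonempty relatively weakly open subsets of U. -/
open Bornology Set Pointwise

variable {X : Type*} [NormedAddCommGroup X] [NormedSpace ℝ X]

/-- `V` is a relatively weakly open subset of `U`: the intersection of `U` with an
open set of the weak topology `σ(X, X*)`. -/
def RelWeaklyOpenIn {X : Type*} [NormedAddCommGroup X] [NormedSpace ℝ X]
    (U V : Set X) : Prop :=
  ∃ W : Set (WeakSpace ℝ X), IsOpen W ∧ V = U ∩ (toWeakSpace ℝ X ⁻¹' W)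

/-!
Let `E = ℝe` and `f e = 1`. By the Daugavet property, every slice of the unit ball contains points
almost orthogonal to a given finite-dimensional subspace, so the ball is the closed convex hull of
such points. Closing off countably many times gives a countable subset `Y` of the ball with the same
feature relative to the spans of `E` and finite parts of `Y`. Now shift the points of `Y` along `e`,
each of them infinitely often, so that `f` takes values `±θ n` on the shifted points `c n`, where
`θ n` increases strictly to `1`. The weakly continuous function `|f|` then isolates every `c n` in
`U = {c n}`, so the singletons of `U` form a determining sequence. Given slices of `U`, however, one
can pick a point in each of them almost orthogonal, modulo `E`, to a fixed `u ∈ U \ E` and to the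
earlier points; these stay so far from `u` that `u` is not in their closed convex hull.
-/

open Metric Filter Topology

/-! ### Slices and closed convex hulls -/

section Slices

variable {A D S : Set X}

theorem IsSlice.subset (hS : IsSlice A S) : S ⊆ A := by
  obtain ⟨-, g, -, ε, -, rfl⟩ := hS
  exact sep_subset A _

theorem IsSlice.exists_norm_eq_one_s6 (hS : IsSlice A S) :
    ∃ g : X →L[ℝ] ℝ, ‖g‖ = 1 ∧ ∃ a : ℝ, S = {x ∈ A | a < g x} := by
  obtain ⟨-, g, hg, ε, -, rfl⟩ := hS
  have hg_pos : 0 < ‖g‖ := norm_pos_iff.mpr hg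
  refine ⟨‖g‖⁻¹ • g, norm_smul_inv_norm (𝕜 := ℝ) hg, ‖g‖⁻¹ * (sSup (g '' A) - ε), ?_⟩
  ext x
  simp [sliceSet, hg_pos]

theorem isSlice_sep_of_isBounded (hA : IsBounded A) {g : X →L[ℝ] ℝ} (hg : g ≠ 0) {a : ℝ}
    (hne : {x ∈ A | a < g x}.Nonempty) : IsSlice A {x ∈ A | a < g x} := by
  obtain ⟨x, hxA, hax⟩ := hne
  have hbdd : BddAbove (g '' A) := (g.lipschitz.isBounded_image hA).bddAbove
  have ha : a < sSup (g '' A) := hax.trans_le (le_csSup hbdd (mem_image_of_mem g hxA))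
  refine ⟨⟨x, hxA, hax⟩, g, hg, sSup (g '' A) - a, sub_pos.mpr ha, ?_⟩
  simp only [sliceSet, sub_sub_cancel]

theorem IsSlice.inter_nonempty (hS : IsSlice A S) (hDA : D ⊆ A)
    (hAD : A ⊆ closedConvexHull ℝ D) : (D ∩ S).Nonempty := by
  obtain ⟨x, hxS⟩ := hS.1
  obtain ⟨g, -, a, rfl⟩ := hS.exists_norm_eq_one_s6
  by_contra hempty
  have hD : D ⊆ {x | g x ≤ a} := fun z hz =>
    not_lt.mp fun haz => hempty ⟨z, hz, hDA hz, haz⟩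
  have hhull : closedConvexHull ℝ D ⊆ {x | g x ≤ a} :=
    closedConvexHull_min hD (convex_halfSpace_le g.toLinearMap.isLinear a)
      (isClosed_le g.continuous continuous_const)
  exact hxS.2.not_ge (hhull (hAD hxS.1))

theorem subset_closedConvexHull_of_forall_isSlice (hA : IsBounded A) (hD : D.Nonempty)
    (hmeet : ∀ S, IsSlice A S → (D ∩ S).Nonempty) : A ⊆ closedConvexHull ℝ D := by
  intro y hy
  by_contra hyD
  obtain ⟨g, a, hDa, hay⟩ := geometric_hahn_banach_closed_point
    convex_closedConvexHull isClosed_closedConvexHull hyD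
  have hD_lt : ∀ z ∈ D, g z < a := fun z hz => hDa z (subset_closedConvexHull hz)
  have hg : g ≠ 0 := by
    rintro rfl
    obtain ⟨z, hz⟩ := hD
    exact lt_asymm (hD_lt z hz) hay
  obtain ⟨z, hzD, -, haz⟩ := hmeet _ (isSlice_sep_of_isBounded hA hg ⟨y, hy, hay⟩)
  exact lt_asymm (hD_lt z hzD) haz

end Slices

/-! ### Almost orthogonality to a subspace -/

/-- The vectors that are `r`-far from the subspace `F`: adding them to an element of `F` decreases
its norm at most by the factor `r`. For `r = 1` this is Birkhoff–James orthogonality of `F` to the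
vector; values `r < 1` close to `1` quantify almost orthogonality. -/
def farSet (F : Submodule ℝ X) (r : ℝ) : Set X :=
  {z | ∀ w ∈ F, r * ‖w‖ ≤ ‖w + z‖}

section FarSet

variable {E F G : Submodule ℝ X} {r s d : ℝ} {w x z : X}

theorem farSet_subset_farSet (hEF : E ≤ F) (hrs : r ≤ s) : farSet F s ⊆ farSet E r :=
  fun _ hz w hw => (mul_le_mul_of_nonneg_right hrs (norm_nonneg w)).trans (hz w (hEF hw))

theorem zero_mem_farSet (hr : r ≤ 1) : (0 : X) ∈ farSet F r := fun w _ => by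
  simpa using mul_le_of_le_one_left (norm_nonneg w) hr

theorem smul_mem_farSet (hr : r ≤ 1) (hz : z ∈ farSet F r) (a : ℝ) : a • z ∈ farSet F r := by
  rcases eq_or_ne a 0 with rfl | ha
  · simpa using zero_mem_farSet hr
  · intro w hw
    calc r * ‖w‖ = |a| * (r * ‖a⁻¹ • w‖) := by
          rw [norm_smul, norm_inv, Real.norm_eq_abs]
          field_simp
      _ ≤ |a| * ‖a⁻¹ • w + z‖ := by gcongr; exact hz _ (F.smul_mem _ hw)
      _ = ‖w + a • z‖ := by
          rw [← Real.norm_eq_abs, ← norm_smul, smul_add, smul_inv_smul₀ ha]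

theorem mem_farSet_of_forall_norm_eq_one (hr : 0 ≤ r) (hz : ‖z‖ ≤ 1)
    (hF : ∀ w ∈ F, ‖w‖ = 1 → 1 + r ≤ ‖w + z‖) : z ∈ farSet F r := by
  intro w hw
  rcases eq_or_ne w 0 with rfl | hw0
  · simp
  set l := ‖w‖
  set u := l⁻¹ • w
  have hl : 0 < l := norm_pos_iff.mpr hw0
  have hu : ‖u‖ = 1 := norm_smul_inv_norm (𝕜 := ℝ) hw0
  have hwu : w = l • u := (smul_inv_smul₀ hl.ne' w).symm
  have huz : 1 + r ≤ ‖u + z‖ := hF u (F.smul_mem _ hw) hu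
  rcases le_total l 1 with hl1 | hl1
  · have htri : ‖u + z‖ ≤ ‖w + z‖ + (1 - l) := by
      calc ‖u + z‖ = ‖(w + z) + (1 - l) • u‖ := by rw [hwu]; congr 1; module
        _ ≤ ‖w + z‖ + ‖(1 - l) • u‖ := norm_add_le _ _
        _ = ‖w + z‖ + (1 - l) := by
          rw [norm_smul, hu, mul_one, Real.norm_of_nonneg (sub_nonneg.mpr hl1)]
    nlinarith
  · have htri : l * ‖u + z‖ ≤ ‖w + z‖ + (l - 1) := by
      calc l * ‖u + z‖ = ‖(w + z) + (l - 1) • z‖ := by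
            rw [← Real.norm_of_nonneg hl.le, ← norm_smul, Real.norm_of_nonneg hl.le, hwu]
            congr 1; module
        _ ≤ ‖w + z‖ + ‖(l - 1) • z‖ := norm_add_le _ _
        _ ≤ ‖w + z‖ + (l - 1) := by
          rw [norm_smul, Real.norm_of_nonneg (sub_nonneg.mpr hl1)]
          gcongr
          exact mul_le_of_le_one_right (sub_nonneg.mpr hl1) hz
    nlinarith

theorem mul_le_norm_sub_of_mem_sup_span_singleton (hr0 : 0 ≤ r) (hr1 : r ≤ 1) (hEG : E ≤ G)
    (hGF : G ≤ F) (hw : w ∈ F) (hx : x ∈ farSet F r + (E : Set X))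
    (hd : ∀ v ∈ G, d ≤ ‖w - v‖) : ∀ v ∈ G ⊔ Submodule.span ℝ {x}, r * d ≤ ‖w - v‖ := by
  intro v hv
  obtain ⟨v', hv', _, hax, rfl⟩ := Submodule.mem_sup.mp hv
  obtain ⟨a, rfl⟩ := Submodule.mem_span_singleton.mp hax
  obtain ⟨z, hz, u, hu, rfl⟩ := hx
  have hG : v' + a • u ∈ G := G.add_mem hv' (G.smul_mem a (hEG hu))
  calc r * d ≤ r * ‖w - (v' + a • u)‖ := by gcongr; exact hd _ hG
    _ ≤ ‖w - (v' + a • u) + (-a) • z‖ :=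
      smul_mem_farSet hr1 hz (-a) _ (F.sub_mem hw (hGF hG))
    _ = ‖w - (v' + a • (z + u))‖ := by congr 1; module

end FarSet

/-! ### Slices of the unit ball of a Daugavet space -/

theorem apply_le_one_of_norm_le_one {φ : X →L[ℝ] ℝ} (hφ : ‖φ‖ ≤ 1) {x : X} (hx : ‖x‖ ≤ 1) :
    φ x ≤ 1 :=
  (le_abs_self _).trans <| by simpa using φ.le_of_opNorm_le_of_le hφ hx

theorem one_sub_lt_of_two_sub_lt_add_mul {a b t δ : ℝ} (ha : a ≤ 1) (ht0 : 0 ≤ t) (ht1 : t ≤ 1)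
    (hb : b ≤ 1) (hδ : δ ≤ 1) (hsum : 2 - δ < a + t * b) :
    1 - δ < a ∧ 1 - δ < t ∧ 1 - δ < b := by
  have htb : t * b ≤ t := mul_le_of_le_one_right ht0 hb
  refine ⟨by linarith, by linarith, ?_⟩
  by_contra! hb_le
  have htδ : t * b ≤ 1 - δ :=
    (mul_le_mul_of_nonneg_left hb_le ht0).trans (mul_le_of_le_one_left (sub_nonneg.mpr hδ) ht1)
  linarith

namespace DaugavetProperty

variable {S : Set X}

theorem nontrivial (h : DaugavetProperty X) : Nontrivial X := by
  by_contra hX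
  have := not_nontrivial_iff_subsingleton.mp hX
  have hnorm := h 0 0
  rw [Subsingleton.elim (ContinuousLinearMap.id ℝ X + (0 : X →L[ℝ] ℝ).smulRight 0) 0,
    norm_zero] at hnorm
  linarith [norm_nonneg ((0 : X →L[ℝ] ℝ).smulRight (0 : X))]

theorem exists_dual_two_sub_lt (h : DaugavetProperty X) {g : X →L[ℝ] ℝ} (hg : ‖g‖ = 1) {w : X}
    (hw : ‖w‖ = 1) {δ : ℝ} (hδ : 0 < δ) :
    ∃ φ : X →L[ℝ] ℝ, ‖φ‖ ≤ 1 ∧ 0 ≤ φ w ∧ ∃ x, ‖x‖ ≤ 1 ∧ 2 - δ < φ x + φ w * g x := by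
  have hnorm : ‖ContinuousLinearMap.id ℝ X + g.smulRight w‖ = 2 := by
    rw [h g w, ContinuousLinearMap.norm_smulRight_apply, hg, hw]
    norm_num
  obtain ⟨x, hx, hx_lt⟩ := ContinuousLinearMap.exists_lt_apply_of_lt_opNorm
    (ContinuousLinearMap.id ℝ X + g.smulRight w) (r := 2 - δ) (by linarith)
  obtain ⟨φ, hφ, hφx⟩ := exists_dual_vector'' ℝ (x + g x • w)
  have hsum : 2 - δ < φ x + φ w * g x := by
    calc 2 - δ < ‖x + g x • w‖ := hx_lt
      _ = φ (x + g x • w) := hφx.symm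
      _ = φ x + φ w * g x := by rw [map_add, map_smul, smul_eq_mul, mul_comm]
  rcases le_total 0 (φ w) with hφw | hφw
  · exact ⟨φ, hφ, hφw, x, hx.le, hsum⟩
  · exact ⟨-φ, by rwa [norm_neg], by simpa using hφw, -x, by simpa using hx.le, by simpa using hsum⟩

theorem exists_isSlice_subset (h : DaugavetProperty X) (hS : IsSlice (closedBall (0 : X) 1) S)
    {w : X} (hw : ‖w‖ = 1) {η : ℝ} (hη : 0 < η) :
    ∃ S' ⊆ S, IsSlice (closedBall (0 : X) 1) S' ∧ ∀ x ∈ S', 2 - η ≤ ‖w + x‖ := by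
  obtain ⟨x₀, hx₀⟩ := hS.1
  obtain ⟨g, hg, a, rfl⟩ := hS.exists_norm_eq_one_s6
  have ha : a < 1 := hx₀.2.trans_le
    (apply_le_one_of_norm_le_one hg.le (mem_closedBall_zero_iff.mp hx₀.1))
  obtain ⟨δ, hδ, hδ_lt⟩ : ∃ δ, 0 < δ ∧ δ < min (1 - a) (min (η / 2) 1) :=
    exists_between (lt_min (sub_pos.mpr ha) (lt_min (half_pos hη) one_pos))
  simp only [lt_min_iff] at hδ_lt
  obtain ⟨hδa, hδη, hδ1⟩ := hδ_lt
  obtain ⟨φ, hφ, hφw, x₁, hx₁, hsum⟩ := h.exists_dual_two_sub_lt hg hw hδ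
  have hbounds : ∀ y ∈ closedBall (0 : X) 1, 2 - δ < φ y + φ w * g y →
      1 - δ < φ y ∧ 1 - δ < φ w ∧ 1 - δ < g y := fun y hy hsum =>
    have hy1 : ‖y‖ ≤ 1 := mem_closedBall_zero_iff.mp hy
    one_sub_lt_of_two_sub_lt_add_mul (apply_le_one_of_norm_le_one hφ hy1) hφw
      (apply_le_one_of_norm_le_one hφ hw.le) (apply_le_one_of_norm_le_one hg.le hy1) hδ1.le hsum
  have hne : φ + φ w • g ≠ 0 := by
    intro hzero
    have hx₁_zero : φ x₁ + φ w * g x₁ = 0 := by simpa using DFunLike.congr_fun hzero x₁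
    linarith
  refine ⟨{y ∈ closedBall 0 1 | 2 - δ < (φ + φ w • g) y}, ?_,
    isSlice_sep_of_isBounded isBounded_closedBall hne ⟨x₁, by simpa using hx₁, hsum⟩, ?_⟩
  · rintro y ⟨hy, hsum⟩
    have hgy := (hbounds y hy hsum).2.2
    exact ⟨hy, by linarith⟩
  · rintro y ⟨hy, hsum⟩
    obtain ⟨hφy, hφw_gt, -⟩ := hbounds y hy hsum
    calc 2 - η ≤ φ (w + y) := by rw [map_add]; linarith
      _ ≤ ‖φ (w + y)‖ := le_abs_self _
      _ ≤ ‖w + y‖ := by simpa using φ.le_of_opNorm_le hφ (w + y)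

theorem exists_isSlice_subset_of_finite (h : DaugavetProperty X) {t : Set X} (ht : t.Finite)
    (ht1 : ∀ w ∈ t, ‖w‖ = 1) {η : ℝ} (hη : 0 < η) (hS : IsSlice (closedBall (0 : X) 1) S) :
    ∃ S' ⊆ S, IsSlice (closedBall (0 : X) 1) S' ∧ ∀ w ∈ t, ∀ x ∈ S', 2 - η ≤ ‖w + x‖ := by
  induction t, ht using Set.Finite.induction_on with
  | empty => exact ⟨S, subset_rfl, hS, by simp⟩
  | @insert w t _ _ ih =>
    rw [forall_mem_insert] at ht1
    obtain ⟨S₁, hS₁S, hS₁, ht_far⟩ := ih ht1.2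
    obtain ⟨S₂, hS₂S₁, hS₂, hw_far⟩ := h.exists_isSlice_subset hS₁ ht1.1 hη
    exact ⟨S₂, hS₂S₁.trans hS₁S, hS₂,
      forall_mem_insert.mpr ⟨hw_far, fun v hv x hx => ht_far v hv x (hS₂S₁ hx)⟩⟩

theorem exists_isSlice_subset_farSet (h : DaugavetProperty X) (F : Submodule ℝ X)
    [FiniteDimensional ℝ F] {r : ℝ} (hr : r < 1) (hS : IsSlice (closedBall (0 : X) 1) S) :
    ∃ S' ⊆ S, IsSlice (closedBall (0 : X) 1) S' ∧ S' ⊆ farSet F r := by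
  obtain ⟨s, hs_max, hs1⟩ : ∃ s, max r 0 < s ∧ s < 1 := exists_between (max_lt hr one_pos)
  obtain ⟨hrs, hs0⟩ := max_lt_iff.mp hs_max
  obtain ⟨η, hη, hηs⟩ : ∃ η, 0 < η ∧ 2 * η = 1 - s := ⟨(1 - s) / 2, by linarith, by ring⟩
  obtain ⟨t, ht_sphere, ht_fin, ht_cover⟩ :=
    (isCompact_sphere (0 : F) 1).finite_cover_balls hη
  obtain ⟨S', hS'S, hS', hfar⟩ := h.exists_isSlice_subset_of_finite (ht_fin.image Subtype.val)
    (by rintro _ ⟨w, hw, rfl⟩; simpa using ht_sphere hw) hη hS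
  refine ⟨S', hS'S, hS', fun z hz => farSet_subset_farSet le_rfl hrs.le ?_⟩
  have hz1 : ‖z‖ ≤ 1 := mem_closedBall_zero_iff.mp (hS'.subset hz)
  refine mem_farSet_of_forall_norm_eq_one hs0.le hz1 fun w hwF hw => ?_
  obtain ⟨v, hv, hwv⟩ := mem_iUnion₂.mp (ht_cover (show (⟨w, hwF⟩ : F) ∈ sphere 0 1 by simpa))
  have hvw : ‖(v : X) - w‖ < η := by simpa [dist_eq_norm, norm_sub_rev] using hwv
  have hvz : 2 - η ≤ ‖(v : X) + z‖ := hfar v (mem_image_of_mem _ hv) z hz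
  have htri : ‖(v : X) + z‖ ≤ ‖w + z‖ + ‖(v : X) - w‖ := by
    simpa [add_comm, add_left_comm] using norm_add_le (w + z) ((v : X) - w)
  linarith

theorem closedBall_subset_closedConvexHull_farSet (h : DaugavetProperty X) (F : Submodule ℝ X)
    [FiniteDimensional ℝ F] {r : ℝ} (hr : r < 1) :
    closedBall (0 : X) 1 ⊆ closedConvexHull ℝ (closedBall 0 1 ∩ farSet F r) := by
  refine subset_closedConvexHull_of_forall_isSlice isBounded_closedBall
    ⟨0, by simp, zero_mem_farSet hr.le⟩ fun S hS => ?_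
  obtain ⟨S', hS'S, hS', hfar⟩ := h.exists_isSlice_subset_farSet F hr hS
  obtain ⟨x, hx⟩ := hS'.1
  exact ⟨x, ⟨hS'.subset hx, hfar hx⟩, hS'S hx⟩

theorem not_finiteDimensional (h : DaugavetProperty X) : ¬ FiniteDimensional ℝ X := by
  intro _
  have := h.nontrivial
  have hfar : closedBall (0 : X) 1 ∩ farSet ⊤ (1 / 2) ⊆ {0} := by
    rintro z ⟨-, hz⟩
    have hz_le := hz (-z) Submodule.mem_top
    rw [norm_neg, neg_add_cancel, norm_zero] at hz_le
    exact norm_le_zero_iff.mp (by linarith)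
  obtain ⟨x, hx⟩ := exists_norm_eq X zero_le_one
  have hx0 : x = 0 := closedConvexHull_min hfar (convex_singleton 0) isClosed_singleton
    (h.closedBall_subset_closedConvexHull_farSet ⊤ (by norm_num) (by simp [hx]))
  simp [hx0] at hx

theorem exists_norm_le_one_notMem (h : DaugavetProperty X) (F : Submodule ℝ X)
    [FiniteDimensional ℝ F] : ∃ y, ‖y‖ ≤ 1 ∧ y ∉ F := by
  have hF : F ≠ ⊤ := by
    rintro rfl
    exact h.not_finiteDimensional (Module.Finite.equiv Submodule.topEquiv)
  obtain ⟨y, -, hy⟩ := SetLike.exists_of_lt hF.lt_top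
  have hy0 : y ≠ 0 := fun h0 => hy (h0 ▸ F.zero_mem)
  exact ⟨‖y‖⁻¹ • y, (norm_smul_inv_norm (𝕜 := ℝ) hy0).le,
    fun hmem => hy ((F.smul_mem_iff (inv_ne_zero (norm_ne_zero_iff.mpr hy0))).mp hmem)⟩

end DaugavetProperty

/-! ### Countable sets closed under taking convex hulls -/

theorem exists_countable_subset_mem_closedConvexHull {Z : Set X} {y : X}
    (hy : y ∈ closedConvexHull ℝ Z) :
    ∃ Z' ⊆ Z, Z'.Countable ∧ y ∈ closedConvexHull ℝ Z' := by
  rw [closedConvexHull_eq_closure_convexHull] at hy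
  obtain ⟨u, hu, hlim⟩ := mem_closure_iff_seq_limit.mp hy
  simp only [convexHull_eq_union_convexHull_finite_subsets Z, mem_iUnion] at hu
  choose t htZ hut using hu
  refine ⟨⋃ n, (t n : Set X), iUnion_subset htZ,
    countable_iUnion fun n => (t n).countable_toSet, ?_⟩
  rw [closedConvexHull_eq_closure_convexHull]
  exact mem_closure_of_tendsto hlim <| .of_forall fun n =>
    convexHull_mono (subset_iUnion (fun n => (t n : Set X)) n) (hut n)

section ClosingOff

variable {ι : Type*} [Countable ι] {C : Set X} {Z : Set X → ι → Set X}

theorem exists_countable_superset_subset_closedConvexHull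
    (hC : ∀ t, t.Finite → ∀ i, C ⊆ closedConvexHull ℝ (C ∩ Z t i))
    {A : Set X} (hA : A.Countable) (hAC : A ⊆ C) :
    ∃ A', A'.Countable ∧ A' ⊆ C ∧ A ⊆ A' ∧
      ∀ t ⊆ A, t.Finite → ∀ i, A ⊆ closedConvexHull ℝ (A' ∩ Z t i) := by
  have hsupport : ∀ t, t.Finite → ∀ i, ∀ y ∈ C, ∃ W ⊆ C ∩ Z t i, W.Countable ∧
      y ∈ closedConvexHull ℝ W := fun t ht i y hy =>
    exists_countable_subset_mem_closedConvexHull (hC t ht i hy)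
  choose! W hWC hW_count hyW using hsupport
  set 𝒯 : Set (Set X) := {t | t.Finite ∧ t ⊆ A}
  have h𝒯 : 𝒯.Countable := countable_ofPred_finite_subset hA
  refine ⟨A ∪ ⋃ t ∈ 𝒯, ⋃ i, ⋃ y ∈ A, W t i y, ?_, ?_, subset_union_left, ?_⟩
  · exact hA.union <| h𝒯.biUnion fun t ht => countable_iUnion fun i =>
      hA.biUnion fun y hy => hW_count t ht.1 i y (hAC hy)
  · exact union_subset hAC <| iUnion₂_subset fun t ht => iUnion_subset fun i =>
      iUnion₂_subset fun y hy => (hWC t ht.1 i y (hAC hy)).trans inter_subset_left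
  · intro t htA ht i y hy
    refine (closedConvexHull ℝ).monotone (subset_inter ?_ ?_) (hyW t ht i y (hAC hy))
    · exact fun z hz => .inr (mem_iUnion₂_of_mem (⟨ht, htA⟩ : t ∈ 𝒯)
        (mem_iUnion_of_mem i (mem_iUnion₂_of_mem hy hz)))
    · exact (hWC t ht i y (hAC hy)).trans inter_subset_right

theorem exists_countable_subset_closedConvexHull_inter
    (hC : ∀ t, t.Finite → ∀ i, C ⊆ closedConvexHull ℝ (C ∩ Z t i)) {y₀ : X} (hy₀ : y₀ ∈ C) :
    ∃ Y, Y.Countable ∧ Y ⊆ C ∧ y₀ ∈ Y ∧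
      ∀ t ⊆ Y, t.Finite → ∀ i, Y ⊆ closedConvexHull ℝ (Y ∩ Z t i) := by
  choose! next hnext_count hnext_C hnext_sup hnext_hull using
    fun (A : Set X) (hA : A.Countable) => exists_countable_superset_subset_closedConvexHull hC hA
  let A : ℕ → Set X := fun n => next^[n] {y₀}
  have hA_succ : ∀ n, A (n + 1) = next (A n) := fun n => Function.iterate_succ_apply' next n _
  have hA : ∀ n, (A n).Countable ∧ A n ⊆ C := by
    intro n
    induction n with
    | zero => exact ⟨countable_singleton y₀, singleton_subset_iff.mpr hy₀⟩
    | succ n ih => exact hA_succ n ▸ ⟨hnext_count _ ih.1 ih.2, hnext_C _ ih.1 ih.2⟩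
  have hmono : Monotone A := monotone_nat_of_le_succ fun n =>
    hA_succ n ▸ hnext_sup _ (hA n).1 (hA n).2
  refine ⟨⋃ n, A n, countable_iUnion fun n => (hA n).1, iUnion_subset fun n => (hA n).2,
    mem_iUnion_of_mem 0 (mem_singleton y₀), fun t htY ht i y hy => ?_⟩
  obtain ⟨m, hym⟩ := mem_iUnion.mp hy
  lift t to Finset X using ht
  obtain ⟨k, htk⟩ := hmono.directed_le.exists_mem_subset_of_finset_subset_biUnion htY
  set n := max m k
  have hhull := hnext_hull (A n) (hA n).1 (hA n).2 t (htk.trans (hmono (le_max_right m k)))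
    t.finite_toSet i (hmono (le_max_left m k) hym)
  rw [← hA_succ] at hhull
  exact (closedConvexHull ℝ).monotone (inter_subset_inter_left _ (subset_iUnion A (n + 1))) hhull

end ClosingOff

/-! ### Far-generated sets -/

/-- `U` is far-generated modulo `E`: however finitely many points of `U` are given, `U` lies in the
closed convex hull of those of its points which, up to an element of `E`, are almost orthogonal to
`E` and to the given points. This is the obstruction to being SCD exploited in `not_isSCD`. -/
def FarGenerated (E : Submodule ℝ X) (U : Set X) : Prop :=
  ∀ t ⊆ U, t.Finite → ∀ r < 1,
    U ⊆ closedConvexHull ℝ (U ∩ (farSet (E ⊔ Submodule.span ℝ t) r + (E : Set X)))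

theorem DaugavetProperty.exists_countable_farGenerated (h : DaugavetProperty X)
    (E : Submodule ℝ X) [FiniteDimensional ℝ E] {y₀ : X} (hy₀ : ‖y₀‖ ≤ 1) :
    ∃ Y : Set X, Y.Countable ∧ Y ⊆ closedBall 0 1 ∧ y₀ ∈ Y ∧ FarGenerated E Y := by
  have hball : ∀ t : Set X, t.Finite → ∀ q : {q : ℚ // (q : ℝ) < 1}, closedBall (0 : X) 1 ⊆
      closedConvexHull ℝ (closedBall 0 1 ∩ farSet (E ⊔ Submodule.span ℝ t) q) := fun t ht q => by
    have := FiniteDimensional.span_of_finite ℝ ht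
    exact h.closedBall_subset_closedConvexHull_farSet _ q.2
  obtain ⟨Y, hY_count, hY_ball, hy₀Y, hY⟩ :=
    exists_countable_subset_closedConvexHull_inter hball (mem_closedBall_zero_iff.mpr hy₀)
  refine ⟨Y, hY_count, hY_ball, hy₀Y, fun t htY ht r hr => ?_⟩
  obtain ⟨q, hrq, hq⟩ := exists_rat_btwn hr
  refine (hY t htY ht ⟨q, hq⟩).trans ((closedConvexHull ℝ).monotone ?_)
  exact inter_subset_inter_right _ <| (farSet_subset_farSet le_rfl hrq.le).trans
    fun z hz => ⟨z, hz, 0, E.zero_mem, add_zero z⟩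

theorem exists_seq_forall_rel_image_Iio {α : Type*} {R : ℕ → Set α → α → Prop}
    (hR : ∀ n t, t.Finite → ∃ x, R n t x) : ∃ x : ℕ → α, ∀ n, R n (x '' Iio n) (x n) := by
  have : Nonempty α := (hR 0 ∅ finite_empty).nonempty
  choose! next hnext using hR
  let T : ℕ → Set α := fun n => n.rec ∅ fun n t => insert (next n t) t
  let x : ℕ → α := fun n => next n (T n)
  have hT : ∀ n, T n = x '' Iio n := by
    intro n
    induction n with
    | zero => simp [T]
    | succ n ih =>
      calc T (n + 1) = insert (x n) (T n) := rfl
        _ = x '' Iio (n + 1) := by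
          rw [ih, ← image_insert_eq, ← Order.Iio_succ_eq_insert, Order.succ_eq_add_one]
  exact ⟨x, fun n => hT n ▸ hnext n (T n) (hT n ▸ (finite_Iio n).image x)⟩

section NotSCD

variable {E : Submodule ℝ X} {U : Set X}

theorem mul_infDist_le_norm_sub {c : ℕ → ℝ} (hc_pos : ∀ n, 0 < c n) (hc0 : c 0 ≤ 1)
    (hc : Antitone c) {w : X} {x : ℕ → X}
    (hx : ∀ n, x n ∈
      farSet (E ⊔ Submodule.span ℝ (insert w (x '' Iio n))) (c (n + 1) / c n) + (E : Set X))
    (n : ℕ) : ∀ v ∈ E ⊔ Submodule.span ℝ (x '' Iio n), c n * infDist w E ≤ ‖w - v‖ := by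
  induction n with
  | zero =>
    intro v hv
    have hvE : v ∈ E := by simpa using hv
    calc c 0 * infDist w E ≤ infDist w E := mul_le_of_le_one_left infDist_nonneg hc0
      _ ≤ dist w v := infDist_le_dist_of_mem hvE
      _ = ‖w - v‖ := dist_eq_norm w v
  | succ n ih =>
    have hspan : E ⊔ Submodule.span ℝ (x '' Iio (n + 1)) =
        (E ⊔ Submodule.span ℝ (x '' Iio n)) ⊔ Submodule.span ℝ {x n} := by
      rw [← Order.succ_eq_add_one, Order.Iio_succ_eq_insert, image_insert_eq,
        Submodule.span_insert, sup_assoc, sup_comm (Submodule.span ℝ {x n})]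
    have hratio : c (n + 1) / c n * (c n * infDist w E) = c (n + 1) * infDist w E := by
      field_simp [(hc_pos n).ne']
    rw [hspan, ← hratio]
    refine mul_le_norm_sub_of_mem_sup_span_singleton (div_pos (hc_pos _) (hc_pos _)).le
      ((div_le_one (hc_pos n)).mpr (hc n.le_succ)) le_sup_left ?_ ?_ (hx n) ih
    · exact sup_le_sup_left (Submodule.span_mono (subset_insert _ _)) E
    · exact Submodule.mem_sup_right (Submodule.subset_span (mem_insert _ _))

theorem closedConvexHull_range_subset_of_forall_le_norm_sub {x : ℕ → X} {w : X} {d : ℝ}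
    (hd : ∀ n, ∀ v ∈ E ⊔ Submodule.span ℝ (x '' Iio n), d ≤ ‖w - v‖) :
    closedConvexHull ℝ (range x) ⊆ {v | d ≤ ‖w - v‖} := by
  rw [closedConvexHull_eq_closure_convexHull]
  refine closure_minimal ?_ (isClosed_le continuous_const (by fun_prop))
  let G : ℕ → Submodule ℝ X := fun n => E ⊔ Submodule.span ℝ (x '' Iio n)
  have hG : Monotone fun n => (G n : Set X) := fun m n hmn =>
    sup_le_sup_left (Submodule.span_mono (image_mono (Iio_subset_Iio hmn))) E
  have hrange : range x ⊆ ⋃ n, (G n : Set X) := by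
    rintro _ ⟨n, rfl⟩
    exact mem_iUnion_of_mem (n + 1) (Submodule.mem_sup_right
      (Submodule.subset_span (mem_image_of_mem x (Nat.lt_succ_self n))))
  refine (convexHull_min hrange (hG.directed_le.convex_iUnion fun n => (G n).convex)).trans ?_
  exact iUnion_subset fun n v hv => hd n v hv

theorem FarGenerated.not_isSCD (hU : FarGenerated E U) (hUE : ¬ U ⊆ closure (E : Set X)) :
    ¬ IsSCD U := by
  rintro ⟨V, hV, hdet⟩
  obtain ⟨w, hwU, hwE⟩ := not_subset.mp hUE
  obtain ⟨c, hc_anti, hc, -⟩ := exists_seq_strictAnti_tendsto' (one_half_lt_one (α := ℝ))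
  have hc_pos : ∀ n, 0 < c n := fun n => one_half_pos.trans (hc n).1
  have hpick : ∀ n (t : Set U), t.Finite → ∃ x : U, (x : X) ∈ V n ∧ (x : X) ∈
      farSet (E ⊔ Submodule.span ℝ (insert w (Subtype.val '' t))) (c (n + 1) / c n) +
        (E : Set X) := by
    intro n t ht
    have hr : c (n + 1) / c n < 1 := (div_lt_one (hc_pos n)).mpr (hc_anti n.lt_succ_self)
    obtain ⟨x, ⟨hxU, hx_far⟩, hxV⟩ := (hV n).inter_nonempty inter_subset_left
      (hU _ (insert_subset hwU (Subtype.coe_image_subset U t)) ((ht.image _).insert w) _ hr)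
    exact ⟨⟨x, hxU⟩, hxV, hx_far⟩
  obtain ⟨x, hx⟩ := exists_seq_forall_rel_image_Iio hpick
  have hx_far := fun n => (hx n).2
  simp only [image_image] at hx_far
  have hdist : ∀ n, ∀ v ∈ E ⊔ Submodule.span ℝ ((fun k => (x k : X)) '' Iio n),
      1 / 2 * infDist w E ≤ ‖w - v‖ := fun n v hv =>
    (mul_le_mul_of_nonneg_right (hc n).1.le infDist_nonneg).trans
      (mul_infDist_le_norm_sub hc_pos (hc 0).2.le hc_anti.antitone hx_far n v hv)
  have hw_hull : w ∈ closedConvexHull ℝ (range fun k => (x k : X)) := by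
    rw [closedConvexHull_eq_closure_convexHull]
    exact hdet _ (fun n => ⟨x n, mem_range_self n, (hx n).1⟩) hwU
  have hw_dist : 1 / 2 * infDist w E ≤ ‖w - w‖ :=
    closedConvexHull_range_subset_of_forall_le_norm_sub hdist hw_hull
  have hw_pos : 0 < infDist w E := (infDist_pos_iff_notMem_closure ⟨0, E.zero_mem⟩).mp hwE
  rw [sub_self, norm_zero] at hw_dist
  linarith

end NotSCD

/-! ### Sequences isolated by a functional -/

theorem exists_isOpen_mem_iff_of_strictMono {θ : ℕ → ℝ} (hθ : StrictMono θ) (n : ℕ) :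
    ∃ O : Set ℝ, IsOpen O ∧ ∀ m, θ m ∈ O ↔ m = n := by
  refine ⟨Iio (θ (n + 1)) \ θ '' Iio n,
    isOpen_Iio.sdiff ((finite_Iio n).image θ).isClosed, fun m => ?_⟩
  simp only [Set.mem_sdiff, mem_Iio, hθ.lt_iff_lt, hθ.injective.mem_set_image]
  omega

section Isolated

variable {c : ℕ → X} {f : X →L[ℝ] ℝ}

theorem relWeaklyOpenIn_singleton (hc : StrictMono fun n => |f (c n)|) (n : ℕ) :
    RelWeaklyOpenIn (range c) {c n} := by
  obtain ⟨O, hO, hO_iff⟩ := exists_isOpen_mem_iff_of_strictMono hc n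
  have hcont : Continuous fun w : WeakSpace ℝ X => f ((toWeakSpace ℝ X).symm w) :=
    WeakBilin.eval_continuous (topDualPairing ℝ X).flip f
  refine ⟨_, hO.preimage hcont.abs, ?_⟩
  ext v
  constructor
  · rintro rfl
    exact ⟨mem_range_self n, (hO_iff n).mpr rfl⟩
  · rintro ⟨⟨m, rfl⟩, hm⟩
    rw [(hO_iff m).mp hm]
    rfl

theorem determining_singleton (c : ℕ → X) : Determining (range c) fun n => {c n} := by
  rintro B hB _ ⟨n, rfl⟩
  obtain ⟨_, hb, rfl⟩ := hB n
  exact subset_closure (subset_convexHull ℝ B hb)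

theorem not_convex_range (hc : c.Injective) : ¬ Convex ℝ (range c) := fun hconv =>
  zero_ne_one <| hc <| (countable_range c).isTotallyDisconnected _ subset_rfl
    hconv.isPreconnected (mem_range_self 0) (mem_range_self 1)

end Isolated

theorem exists_seq_frequently_eq {α : Type*} {S : Set α} (hS : S.Countable) (hne : S.Nonempty) :
    ∃ p : ℕ → α, (∀ n, p n ∈ S) ∧ ∀ q ∈ S, ∃ᶠ n in atTop, p n = q := by
  obtain ⟨u, rfl⟩ := hS.exists_eq_range hne
  refine ⟨fun n => u n.unpair.1, fun n => mem_range_self _, ?_⟩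
  rintro _ ⟨j, rfl⟩
  exact frequently_atTop.mpr fun N => ⟨Nat.pair j N, Nat.right_le_pair j N, by simp⟩

/-! ### Shifting along a vector -/

/-- The vector `x + (s - f x) • e`, as a function of the pair `(x, s)`: the shift of `x` along `e`
to height `s`, where height is measured by a functional `f` with `f e = 1`. -/
noncomputable def shift (f : X →L[ℝ] ℝ) (e : X) : X × ℝ →L[ℝ] X :=
  ContinuousLinearMap.fst ℝ X ℝ +
    (ContinuousLinearMap.snd ℝ X ℝ - f.comp (ContinuousLinearMap.fst ℝ X ℝ)).smulRight e

section Shift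

variable {f : X →L[ℝ] ℝ} {e : X}

theorem shift_apply (x : X) (s : ℝ) : shift f e (x, s) = x + (s - f x) • e := rfl

theorem apply_shift (hfe : f e = 1) (x : X) (s : ℝ) : f (shift f e (x, s)) = s := by
  simp [shift_apply, hfe]

theorem shift_mem_iff {E : Submodule ℝ X} (he : e ∈ E) {x : X} {s : ℝ} :
    shift f e (x, s) ∈ E ↔ x ∈ E := by
  rw [shift_apply, E.add_mem_iff_left (E.smul_mem _ he)]

/-- The sequence obtained from pairs `p n = (y, σ)` by shifting `y` along `e` to height `θ n * σ`.
In the application the `p n` run through `Y ×ˢ {1, -1}`, each pair occurring infinitely often. -/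
noncomputable def shiftSeq (f : X →L[ℝ] ℝ) (e : X) (p : ℕ → X × ℝ) (θ : ℕ → ℝ) (n : ℕ) : X :=
  shift f e ((p n).1, θ n * (p n).2)

variable {p : ℕ → X × ℝ} {θ : ℕ → ℝ}

theorem isBounded_range_shiftSeq (hp : IsBounded (range p)) (hθ : ∀ n, |θ n| ≤ 1) :
    IsBounded (range (shiftSeq f e p θ)) := by
  obtain ⟨R, hR⟩ := hp.exists_norm_le
  refine ((shift f e).lipschitz.isBounded_image (isBounded_closedBall (x := 0) (r := R))).subset ?_
  rintro _ ⟨n, rfl⟩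
  obtain ⟨hp1, hp2⟩ := norm_prod_le_iff.mp (hR (p n) (mem_range_self n))
  refine mem_image_of_mem _ (mem_closedBall_zero_iff.mpr (norm_prod_le_iff.mpr ⟨hp1, ?_⟩))
  rw [norm_mul]
  exact (mul_le_of_le_one_left (norm_nonneg _) (hθ n)).trans hp2

theorem abs_apply_shiftSeq (hfe : f e = 1) {n : ℕ} (hp : |(p n).2| = 1) (hθ : 0 ≤ θ n) :
    |f (shiftSeq f e p θ n)| = θ n := by
  rw [shiftSeq, apply_shift hfe, abs_mul, hp, mul_one, abs_of_nonneg hθ]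

variable {Y : Set X}

theorem shift_mem_closure_range_shiftSeq (hp : ∀ q ∈ Y ×ˢ {1, -1}, ∃ᶠ n in atTop, p n = q)
    (hθ : Tendsto θ atTop (𝓝 1)) {E : Submodule ℝ X} (he : e ∈ E) {B : Set X} {z : X} (hzY : z ∈ Y)
    (hzB : z ∈ B + (E : Set X)) {σ : ℝ} (hσ : σ ∈ ({1, -1} : Set ℝ)) :
    shift f e (z, σ) ∈ closure (range (shiftSeq f e p θ) ∩ (B + (E : Set X))) := by
  have hlim : Tendsto (fun n => shift f e (z, θ n * σ)) atTop (𝓝 (shift f e (z, σ))) := by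
    refine ((shift f e).continuous.tendsto _).comp (tendsto_const_nhds.prodMk_nhds ?_)
    simpa using hθ.mul_const σ
  refine mem_closure_of_frequently_of_tendsto ((hp (z, σ) ⟨hzY, hσ⟩).mono fun n hn => ?_) hlim
  obtain ⟨b, hb, v, hv, rfl⟩ := hzB
  exact ⟨⟨n, by rw [shiftSeq, hn]⟩, b, hb, v + (θ n * σ - f (b + v)) • e,
    E.add_mem hv (E.smul_mem _ he), (add_assoc b v _).symm⟩

theorem span_shiftSeq_image_le {E : Submodule ℝ X} (he : e ∈ E) (N : Set ℕ) :
    Submodule.span ℝ (shiftSeq f e p θ '' N) ≤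
      E ⊔ Submodule.span ℝ ((fun n => (p n).1) '' N) := by
  rw [Submodule.span_le, image_subset_iff]
  intro n hn
  exact (shift_mem_iff (Submodule.mem_sup_left he)).mpr
    (Submodule.mem_sup_right (Submodule.subset_span (mem_image_of_mem _ hn)))

theorem FarGenerated.range_shiftSeq {E : Submodule ℝ X} (hY : FarGenerated E Y) (he : e ∈ E)
    (hpY : ∀ n, p n ∈ Y ×ˢ {1, -1}) (hp : ∀ q ∈ Y ×ˢ {1, -1}, ∃ᶠ n in atTop, p n = q)
    (hθ1 : ∀ n, |θ n| ≤ 1) (hθ : Tendsto θ atTop (𝓝 1)) :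
    FarGenerated E (range (shiftSeq f e p θ)) := by
  intro t ht ht_fin r hr
  obtain ⟨N, -, hN, rfl⟩ := exists_subset_image_finite_and.mp
    ⟨t, image_univ.symm ▸ ht, ht_fin, rfl⟩
  set far := farSet (E ⊔ Submodule.span ℝ ((fun n => (p n).1) '' N)) r
  set H := closedConvexHull ℝ (range (shiftSeq f e p θ) ∩ (far + (E : Set X)))
  have hfar : far ⊆ farSet (E ⊔ Submodule.span ℝ (shiftSeq f e p θ '' N)) r :=
    farSet_subset_farSet (sup_le le_sup_left (span_shiftSeq_image_le he N)) le_rfl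
  suffices hH : range (shiftSeq f e p θ) ⊆ H from hH.trans <|
    (closedConvexHull ℝ).monotone (inter_subset_inter_right _ (add_subset_add_right hfar))
  have hext : closedConvexHull ℝ ((Y ∩ (far + (E : Set X))) ×ˢ ({1, -1} : Set ℝ)) ⊆
      shift f e ⁻¹' H := by
    refine closedConvexHull_min ?_ (convex_closedConvexHull.is_linear_preimage
      (shift f e).toLinearMap.isLinear) (isClosed_closedConvexHull.preimage (shift f e).continuous)
    rintro ⟨z, σ⟩ ⟨⟨hzY, hz⟩, hσ⟩
    exact closure_subset_closedConvexHull (shift_mem_closure_range_shiftSeq hp hθ he hzY hz hσ)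
  rintro _ ⟨n, rfl⟩
  refine hext ?_
  rw [closedConvexHull_eq_closure_convexHull, convexHull_prod, closure_prod_eq,
    ← closedConvexHull_eq_closure_convexHull]
  refine ⟨hY _ ?_ (hN.image _) r hr (hpY n).1, subset_closure ?_⟩
  · rintro _ ⟨k, -, rfl⟩
    exact (hpY k).1
  · rw [convexHull_pair, segment_symm, segment_eq_Icc (by norm_num), mem_Icc, ← abs_le, abs_mul,
      (abs_eq zero_le_one).mpr (hpY n).2, mul_one]
    exact hθ1 n

theorem FarGenerated.exists_seq_strictMono_abs {E : Submodule ℝ X} (hY : FarGenerated E Y)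
    (hY_count : Y.Countable) (hY_bdd : IsBounded Y) (hYE : ¬ Y ⊆ closure (E : Set X)) (he : e ∈ E)
    (hfe : f e = 1) :
    ∃ c : ℕ → X, IsBounded (range c) ∧ StrictMono (fun n => |f (c n)|) ∧
      FarGenerated E (range c) ∧ ¬ range c ⊆ closure (E : Set X) := by
  obtain ⟨y, hyY, hyE⟩ := not_subset.mp hYE
  obtain ⟨p, hpY, hp⟩ := exists_seq_frequently_eq
    (hY_count.prod (toFinite ({1, -1} : Set ℝ)).countable) ⟨(y, 1), hyY, by simp⟩
  have hp_bdd : IsBounded (range p) :=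
    (hY_bdd.prod (toFinite {1, -1}).isBounded).subset (range_subset_iff.mpr hpY)
  obtain ⟨θ, hθ_mono, hθ, hθ_lim⟩ := exists_seq_strictMono_tendsto' (zero_lt_one (α := ℝ))
  have hθ1 : ∀ n, |θ n| ≤ 1 := fun n => abs_le.mpr ⟨by linarith [(hθ n).1], (hθ n).2.le⟩
  have hfc : (fun n => |f (shiftSeq f e p θ n)|) = θ := funext fun n =>
    abs_apply_shiftSeq hfe ((abs_eq zero_le_one).mpr (hpY n).2) (hθ n).1.le
  refine ⟨shiftSeq f e p θ, isBounded_range_shiftSeq hp_bdd hθ1, hfc.symm ▸ hθ_mono,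
    hY.range_shiftSeq he hpY hp hθ1 hθ_lim, fun hsub => hyE ?_⟩
  obtain ⟨n, hn⟩ := (hp (y, 1) ⟨hyY, by simp⟩).exists
  have hyn : (p n).1 ∈ E.topologicalClosure :=
    (shift_mem_iff (E.le_topologicalClosure he)).mp (hsub (mem_range_self n))
  rwa [hn] at hyn

end Shift

theorem exists_nonconvex_non_scd_with_determining_weakly_open_general
    {X : Type*} [NormedAddCommGroup X] [NormedSpace ℝ X] (h : DaugavetProperty X) :
    ∃ U : Set X, IsBounded U ∧ ¬ Convex ℝ U ∧ ¬ IsSCD U ∧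
      ∃ V : ℕ → Set X, (∀ n, (V n).Nonempty ∧ RelWeaklyOpenIn U (V n)) ∧
        Determining U V := by
  have := h.nontrivial
  obtain ⟨e, he⟩ := exists_ne (0 : X)
  obtain ⟨f, hfe⟩ : ∃ f : X →L[ℝ] ℝ, f e = 1 := SeparatingDual.exists_eq_one he
  let E := Submodule.span ℝ {e}
  have heE : e ∈ E := Submodule.mem_span_singleton_self e
  obtain ⟨y, hy, hyE⟩ := h.exists_norm_le_one_notMem E
  obtain ⟨Y, hY_count, hY_ball, hyY, hY⟩ := h.exists_countable_farGenerated E hy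
  have hYE : ¬ Y ⊆ closure (E : Set X) := by
    rw [(Submodule.closed_of_finiteDimensional E).closure_eq]
    exact fun hsub => hyE (hsub hyY)
  obtain ⟨c, hc_bdd, hc_mono, hc, hcE⟩ := hY.exists_seq_strictMono_abs hY_count
    (isBounded_closedBall.subset hY_ball) hYE heE hfe
  have hc_inj : c.Injective := hc_mono.injective.of_comp (f := fun x => |f x|)
  exact ⟨range c, hc_bdd, not_convex_range hc_inj, hc.not_isSCD hcE, fun n => {c n},
    fun n => ⟨singleton_nonempty _, relWeaklyOpenIn_singleton hc_mono n⟩, determining_singleton c⟩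

theorem exists_nonconvex_non_scd_with_determining_weakly_open
    {X : Type*} [NormedAddCommGroup X] [NormedSpace ℝ X] [CompleteSpace X]
    (h : DaugavetProperty X) :
    ∃ U : Set X, IsBounded U ∧ ¬ Convex ℝ U ∧ ¬ IsSCD U ∧
      ∃ V : ℕ → Set X, (∀ n, (V n).Nonempty ∧ RelWeaklyOpenIn U (V n)) ∧
        Determining U V :=
  exists_nonconvex_non_scd_with_determining_weakly_open_general h
end
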